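/- Let p be a prime with p ≡ 3 (mod 4), and let α be a real number with 0 < α < 1 such that αp is not an integer. Then the partial sums Σ_{m=1}^{M} ((1 − cos(2πmα))/m) · (m/p) converge as M → ∞ to (π/√p) · L(α,p). -/

import Mathlib

open Filter

section Helpers

open Topology Polynomial

lemma sin_series (x : ℝ) (h0 : 0 < x) (h1 : x < 1) :
    Tendsto (fun M : ℕ => ∑ m ∈ Finset.range M, Real.sin (2 * Real.pi * m * x) / m) atTop
      (𝓝 (Real.pi * (1/2 - x))) := by
  have hpi := Real.pi_pos
  set z : ℂ := Complex.exp ((2 * Real.pi * x : ℝ) * Complex.I) with hz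
  have hnz : ‖z‖ = 1 := Complex.norm_exp_ofReal_mul_I _
  have hs : 0 < Real.sin (Real.pi * x) :=
    Real.sin_pos_of_pos_of_lt_pi (by positivity) (by nlinarith)
  have hdec : 1 - z = ((2 * Real.sin (Real.pi * x) : ℝ) : ℂ) *
      (Real.cos (Real.pi * x - Real.pi / 2) + Real.sin (Real.pi * x - Real.pi / 2) * Complex.I) := by
    rw [Real.cos_sub_pi_div_two, Real.sin_sub_pi_div_two, hz, Complex.exp_mul_I,
      ← Complex.ofReal_cos, ← Complex.ofReal_sin,
      show 2 * Real.pi * x = 2 * (Real.pi * x) by ring, Real.cos_two_mul', Real.sin_two_mul]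
    have := Real.sin_sq_add_cos_sq (Real.pi * x)
    have h2 : (Real.sin (Real.pi * x) : ℂ) ^ 2 + (Real.cos (Real.pi * x) : ℂ) ^ 2 = 1 := by
      exact_mod_cast this
    push_cast at h2 ⊢
    linear_combination -h2
  have harg : (1 - z).arg = Real.pi * x - Real.pi / 2 := by
    rw [hdec]
    push_cast
    have := Complex.arg_mul_cos_add_sin_mul_I (r := 2 * Real.sin (Real.pi * x)) (by positivity)
      (θ := Real.pi * x - Real.pi / 2) ⟨by nlinarith, by nlinarith⟩
    push_cast at this
    exact this
  have hre : 0 < (1 - z).re := by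
    rw [hdec]
    rw [Complex.re_ofReal_mul, Real.cos_sub_pi_div_two, Real.sin_sub_pi_div_two,
      Complex.add_re, Complex.re_ofReal_mul, Complex.ofReal_re, Complex.I_re]
    simp only [mul_zero, add_zero]
    positivity
  have hne : z ≠ 1 := by
    intro h; rw [h] at hre; simp at hre
  -- Dirichlet test
  have hc : CauchySeq fun n ↦ ∑ i ∈ Finset.range n, ((1:ℝ) / ((i:ℝ) + 1)) • z ^ (i + 1) := by
    apply Antitone.cauchySeq_series_mul_of_tendsto_zero_of_bounded (b := 2 / ‖1 - z‖)
    · intro a b hab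
      have : (a:ℝ) ≤ b := by exact_mod_cast hab
      show 1 / ((b:ℝ) + 1) ≤ 1 / ((a:ℝ) + 1)
      gcongr
    · exact tendsto_one_div_add_atTop_nhds_zero_nat
    · intro n
      have : ∑ i ∈ Finset.range n, z ^ (i + 1) = z * ((z ^ n - 1) / (z - 1)) := by
        rw [← geom_sum_eq hne, Finset.mul_sum]
        exact Finset.sum_congr rfl fun i _ => by ring
      rw [this, norm_mul, hnz, one_mul, norm_div, norm_sub_rev z 1]
      gcongr
      calc _ ≤ ‖z ^ n‖ + ‖(1:ℂ)‖ := norm_sub_le _ _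
        _ = 2 := by rw [norm_pow, hnz]; norm_num
  obtain ⟨l, hl⟩ := cauchySeq_tendsto_of_complete hc
  have hl' : Tendsto (fun n ↦ ∑ i ∈ Finset.range n, z ^ i / (i:ℂ)) atTop (𝓝 l) := by
    rw [← tendsto_add_atTop_iff_nat 1]
    refine hl.congr fun n => ?_
    rw [Finset.sum_range_succ']
    simp
    refine Finset.sum_congr rfl fun i _ => ?_
    ring
  have hab := Complex.tendsto_tsum_powerSeries_nhdsWithin_lt hl'
  rw [tendsto_map'_iff] at hab
  have hlog : Tendsto (fun r : ℝ => - Complex.log (1 - (r:ℂ) * z)) (𝓝[<] 1) (𝓝 (- Complex.log (1 - z))) := by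
    have hcont : ContinuousAt (fun r : ℝ => - Complex.log (1 - (r:ℂ) * z)) 1 := by
      apply ContinuousAt.neg
      apply ContinuousAt.clog
      · fun_prop
      · simp only [Complex.ofReal_one, one_mul]
        exact Or.inl hre
    have := hcont.tendsto
    simp only [Complex.ofReal_one, one_mul] at this
    exact this.mono_left nhdsWithin_le_nhds
  have hll : l = - Complex.log (1 - z) := by
    refine tendsto_nhds_unique hab (hlog.congr' ?_)
    have : Set.Ioo (0:ℝ) 1 ∈ 𝓝[<] (1:ℝ) := Ioo_mem_nhdsLT (by norm_num)
    filter_upwards [this] with r hr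
    have hn : ‖(r:ℂ) * z‖ < 1 := by
      rw [norm_mul, hnz, mul_one, Complex.norm_real, Real.norm_eq_abs, abs_of_pos hr.1]; exact hr.2
    rw [← (Complex.hasSum_taylorSeries_neg_log hn).tsum_eq]
    simp only [Function.comp]
    refine tsum_congr fun n => ?_
    rw [mul_pow]; ring
  have him := (Complex.continuous_im.tendsto l).comp hl'
  have e : l.im = Real.pi * (1/2 - x) := by
    rw [hll, Complex.neg_im, Complex.log_im, harg]; ring
  rw [e] at him
  refine him.congr fun n => ?_
  simp only [Function.comp, Complex.im_sum]
  refine Finset.sum_congr rfl fun i _ => ?_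
  rw [Complex.div_natCast_im, hz, ← Complex.exp_nat_mul,
    show (i:ℂ) * (((2 * Real.pi * x : ℝ):ℂ) * Complex.I) = ((2 * Real.pi * i * x : ℝ) : ℂ) * Complex.I by push_cast; ring,
    Complex.exp_ofReal_mul_I_im]

/-- series at arbitrary point -/
lemma sin_series' (x : ℝ) (hx : ∀ k : ℤ, x ≠ k) :
    Tendsto (fun M : ℕ => ∑ m ∈ Finset.range M, Real.sin (2 * Real.pi * m * x) / m) atTop
      (𝓝 (Real.pi * (1/2 - Int.fract x))) := by
  have h := sin_series (Int.fract x) (by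
    rcases (Int.fract_nonneg x).lt_or_eq with h | h
    · exact h
    · exact absurd (by have := Int.floor_add_fract x; rw [← h, add_zero] at this; exact this.symm : x = (⌊x⌋:ℤ)) (hx _)) (Int.fract_lt_one x)
  refine h.congr fun M => Finset.sum_congr rfl fun m _ => ?_
  congr 1
  rw [Int.fract, show 2 * Real.pi * m * (x - ⌊x⌋) = 2 * Real.pi * m * x - ((m * ⌊x⌋ : ℤ) : ℝ) * (2 * Real.pi) by push_cast; ring,
    Real.sin_sub_int_mul_two_pi]

lemma theta_aux {K : Type*} [CommRing K] (N i : ℕ) (hi : i ≤ N) :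
    ∃ R : K[X], (fun f : K[X] => X * derivative f)^[i] ((X - 1) ^ N) = (X - 1) ^ (N - i) * R ∧
      R.eval 1 = (N.descFactorial i : K) := by
  induction i with
  | zero => exact ⟨1, by simp, by simp⟩
  | succ i ih =>
    obtain ⟨R, h1, h2⟩ := ih (by omega)
    obtain ⟨d, hd⟩ : ∃ d, N = i + 1 + d := ⟨N - (i+1), by omega⟩
    refine ⟨X * (((d + 1 : ℕ) : K[X]) * R + (X - 1) * derivative R), ?_, ?_⟩
    · rw [Function.iterate_succ_apply', h1, show N - i = d + 1 by omega,
        show N - (i+1) = d by omega]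
      simp [derivative_mul, derivative_pow]
      ring
    · rw [Nat.descFactorial_succ, show N - i = d + 1 by omega]
      simp [h2]

lemma theta_sum {K : Type*} [CommRing K] (N i : ℕ) :
    (fun f : K[X] => X * derivative f)^[i] (∑ j ∈ Finset.range N, X ^ j) =
      ∑ j ∈ Finset.range N, C ((j : K) ^ i) * X ^ j := by
  induction i with
  | zero => simp
  | succ i ih =>
    rw [Function.iterate_succ_apply', ih]
    simp only [derivative_sum, Finset.mul_sum]
    refine Finset.sum_congr rfl fun j _ => ?_
    rcases j with _ | j
    · rcases i with _ | i <;> simp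
    · simp [derivative_mul, derivative_pow]
      ring

lemma eps_eq (p m : ℕ) [hp : Fact p.Prime] (hm : p = 2 * m + 1) (hm0 : 0 < m) (ε : ℤ) (hε : ε = 1 ∨ ε = -1)
    (h : cyclotomic p ℤ ∣ ∑ j ∈ Finset.range p, C (legendreSym p j) * X ^ j
      - C ε * ∏ k ∈ Finset.range m, (X ^ (k + 1) - X ^ (p - (k + 1)))) :
    ε = legendreSym p (-2) := by
  have hcyc : (cyclotomic p ℤ).map (Int.castRingHom (ZMod p)) = (X - 1) ^ (2 * m) := by
    rw [map_cyclotomic_int]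
    have := cyclotomic_mul_prime_eq_pow_of_not_dvd (ZMod p) (p := p) (n := 1) (by simpa using hp.out.one_lt.ne')
    rw [one_mul, cyclotomic_one] at this
    rw [this]; congr 1; omega
  have hgeom : ∑ j ∈ Finset.range p, (X : (ZMod p)[X]) ^ j = (X - 1) ^ (2 * m) := by
    rw [← hcyc, map_cyclotomic_int, cyclotomic_prime]
  have h' := Polynomial.map_dvd (Int.castRingHom (ZMod p)) h
  rw [hcyc] at h'
  have hL : (∑ j ∈ Finset.range p, C (legendreSym p j) * X ^ j).map (Int.castRingHom (ZMod p))
      = ∑ j ∈ Finset.range p, C ((j : ZMod p) ^ m) * X ^ j := by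
    simp only [Polynomial.map_sum, Polynomial.map_mul, map_C, Polynomial.map_pow, map_X]
    refine Finset.sum_congr rfl fun j _ => ?_
    rw [eq_intCast (Int.castRingHom (ZMod p)), legendreSym.eq_pow, show p / 2 = m by omega]
    simp
  obtain ⟨R, hR1, hR2⟩ := theta_aux (K := ZMod p) (2 * m) m (by omega)
  rw [← hgeom, theta_sum, show 2 * m - m = m by omega] at hR1
  have hconst : ∀ {A : Type} [CommRing A] (c : A), c ^ m = ∏ _k ∈ Finset.range m, c := by
    intro A _ c; simp
  have hB : (∏ k ∈ Finset.range m, ((X : ℤ[X]) ^ (k + 1) - X ^ (p - (k + 1)))).map (Int.castRingHom (ZMod p))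
      = (X - 1) ^ m * ∏ k ∈ Finset.range m, ((∑ i ∈ Finset.range (k + 1), X ^ i) - (∑ i ∈ Finset.range (p - (k + 1)), X ^ i)) := by
    rw [Polynomial.map_prod]
    rw [hconst, ← Finset.prod_mul_distrib]
    refine Finset.prod_congr rfl fun k _ => ?_
    rw [mul_sub, mul_geom_sum, mul_geom_sum]
    simp
  rw [Polynomial.map_sub, Polynomial.map_mul, hL, hR1, hB, two_mul, pow_add, ← mul_assoc, mul_comm (Polynomial.map _ _),
    mul_assoc, ← mul_sub] at h'
  have hX : ((X : (ZMod p)[X]) - 1) ^ m ≠ 0 := pow_ne_zero _ (by simpa using X_sub_C_ne_zero (1 : ZMod p))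
  have h2 := (mul_dvd_mul_iff_left hX).1 h'
  have h3 : (X - C (1 : ZMod p)) ∣ _ := (dvd_pow_self _ hm0.ne').trans (by simpa using h2)
  rw [dvd_iff_isRoot, IsRoot.def] at h3
  simp only [eval_sub, eval_mul, eval_prod, hR2, eval_geom_sum] at h3
  simp at h3
  have h4 : ∏ k ∈ Finset.range m, (((k : ZMod p) + 1) - ((p - (k + 1) : ℕ) : ZMod p)) = 2 ^ m * (m.factorial : ZMod p) := by
    rw [← Finset.prod_range_add_one_eq_factorial, Nat.cast_prod, hconst, ← Finset.prod_mul_distrib]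
    refine Finset.prod_congr rfl fun k hk => ?_
    have := (Finset.mem_range.1 hk)
    rw [Nat.cast_sub (by omega)]
    simp; ring
  have h5 : ((2 * m).descFactorial m : ZMod p) = (-1) ^ m * (m.factorial : ZMod p) := by
    rw [Nat.descFactorial_eq_prod_range, ← Finset.prod_range_add_one_eq_factorial, Nat.cast_prod, Nat.cast_prod]
    rw [hconst, ← Finset.prod_mul_distrib]
    refine Finset.prod_congr rfl fun k hk => ?_
    have := (Finset.mem_range.1 hk)
    rw [Nat.cast_sub (by omega)]
    have hz : ((2 * m + 1 : ℕ) : ZMod p) = 0 := by rw [← hm]; simp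
    push_cast at hz ⊢
    linear_combination hz
  rw [h4, h5] at h3
  have hf : (m.factorial : ZMod p) ≠ 0 := by
    rw [Ne, ZMod.natCast_eq_zero_iff, hp.out.dvd_factorial]; omega
  have h6 : ((-1 : ZMod p)) ^ m = ε * 2 ^ m := by
    apply mul_right_cancel₀ hf
    linear_combination h3
  have h7 : ((legendreSym p (-2) : ℤ) : ZMod p) = ε := by
    rw [legendreSym.eq_pow, show p / 2 = m by omega]
    have he : (ε : ZMod p) * ε = 1 := by rcases hε with rfl | rfl <;> simp
    have hsq : ((-1 : ZMod p)) ^ m * (-1) ^ m = 1 := by rw [← mul_pow]; simp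
    push_cast
    rw [neg_pow]
    linear_combination (ε : ZMod p) * hsq - (-1)^m * he * 2^m - (-1:ZMod p)^m * ε * h6
  have hp3 : 2 < p := by omega
  have hne2 : ((-2 : ℤ) : ZMod p) ≠ 0 := by
    rw [Ne, ZMod.intCast_zmod_eq_zero_iff_dvd]
    intro hd
    have := Int.le_of_dvd (by norm_num) (Int.dvd_neg.2 hd)
    omega
  have : Fact (2 < p) := ⟨hp3⟩
  have hc1 : (-1 : ZMod p) ≠ 1 := ZMod.neg_one_ne_one
  rcases legendreSym.eq_one_or_neg_one p hne2 with h8 | h8 <;> rcases hε with rfl | rfl <;> rw [h8] at h7 ⊢ <;> simp at h7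
  · exact absurd h7.symm hc1
  · exact absurd h7 hc1

lemma sum_zmod_eq (p : ℕ) [NeZero p] (F : ZMod p → ℂ) :
    ∑ a, F a = ∑ j ∈ Finset.range p, F (j : ZMod p) := by
  refine Finset.sum_nbij' (fun a => a.val) (fun j => (j : ZMod p)) ?_ ?_ ?_ ?_ ?_
  · intro a _; simpa using ZMod.val_lt a
  · intro a _; simp
  · intro a _; simp
  · intro j hj; exact ZMod.val_cast_of_lt (by simpa using hj)
  · intro a _; simp

lemma zeta_prod (p m : ℕ) [hp : Fact p.Prime] (hm : p = 2 * m + 1) (hm0 : 0 < m) :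
    ∏ k ∈ Finset.range m, ((Complex.exp (2 * Real.pi * Complex.I / p)) ^ (k + 1)
      - (Complex.exp (2 * Real.pi * Complex.I / p)) ^ (p - (k + 1))) = Complex.I ^ m * (Real.sqrt p : ℂ) := by
  set ζ := Complex.exp (2 * Real.pi * Complex.I / p) with hζ
  have hprim : IsPrimitiveRoot ζ p := Complex.isPrimitiveRoot_exp p hp.out.ne_zero
  have hnorm : ‖ζ‖ = 1 := hprim.norm'_eq_one hp.out.ne_zero
  have hp0 : (0:ℝ) < p := by exact_mod_cast hp.out.pos
  have hpC : (p:ℂ) ≠ 0 := by exact_mod_cast hp.out.ne_zero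
  have hterm : ∀ k ∈ Finset.range m, ζ ^ (k+1) - ζ ^ (p - (k+1)) =
      Complex.I * ((2 * Real.sin (2 * Real.pi * (k+1) / p) : ℝ) : ℂ) := by
    intro k hk
    have hk' := Finset.mem_range.1 hk
    have e1 : ζ ^ (k+1) = Complex.exp (((2 * Real.pi * (k+1) / p : ℝ) : ℂ) * Complex.I) := by
      rw [hζ, ← Complex.exp_nat_mul]; congr 1; push_cast; ring
    have e2 : ζ ^ (p - (k+1)) = Complex.exp (-((2 * Real.pi * (k+1) / p : ℝ) : ℂ) * Complex.I) := by
      rw [neg_mul, Complex.exp_neg, ← e1]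
      apply eq_inv_of_mul_eq_one_left
      rw [← pow_add, show p - (k+1) + (k+1) = p by omega, hprim.pow_eq_one]
    rw [e1, e2, Complex.exp_mul_I, Complex.exp_mul_I, Complex.cos_neg, Complex.sin_neg]
    push_cast; ring
  have hpos : ∀ k ∈ Finset.range m, 0 < 2 * Real.sin (2 * Real.pi * (k+1) / p) := by
    intro k hk
    have hk' := Finset.mem_range.1 hk
    have hpi := Real.pi_pos
    have : (2:ℝ) * (k + 1) < p := by exact_mod_cast (by omega : 2 * (k+1) < p)
    refine mul_pos two_pos (Real.sin_pos_of_pos_of_lt_pi (by positivity) ?_)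
    rw [div_lt_iff₀ hp0]; nlinarith
  set S := ∏ k ∈ Finset.range m, (2 * Real.sin (2 * Real.pi * (k+1) / p)) with hS
  have hSpos : 0 < S := Finset.prod_pos hpos
  have hB : ∏ k ∈ Finset.range m, (ζ ^ (k+1) - ζ ^ (p - (k+1))) = Complex.I ^ m * (S : ℂ) := by
    rw [Finset.prod_congr rfl hterm, Finset.prod_mul_distrib, hS]
    push_cast; simp
  have hSq : S * S = p := by
    have hSn : S = ∏ k ∈ Finset.range m, ‖ζ ^ (k+1) - ζ ^ (p - (k+1))‖ := by
      rw [← norm_prod, hB]; simp [abs_of_pos hSpos]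
    have hrefl : ∏ k ∈ Finset.range m, ‖ζ ^ (k+1) - ζ ^ (p - (k+1))‖ =
        ∏ k ∈ Finset.range m, ‖ζ ^ (m + k+1) - ζ ^ (p - (m + k+1))‖ := by
      rw [← Finset.prod_range_reflect]
      refine Finset.prod_congr rfl fun k hk => ?_
      have hk' := Finset.mem_range.1 hk
      rw [norm_sub_rev, show p - (m - 1 - k + 1) = m + k + 1 by omega,
        show m - 1 - k + 1 = p - (m + k + 1) by omega]
    have hfull : S * S = ∏ k ∈ Finset.range (m + m), ‖ζ ^ (k+1) - ζ ^ (p - (k+1))‖ := by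
      rw [Finset.prod_range_add, ← hrefl, ← hSn]
    have h2 : IsPrimitiveRoot (ζ ^ 2) (2 * m + 1) := by
      rw [← hm]
      refine hprim.pow_of_coprime 2 ?_
      rw [Nat.coprime_comm, hp.out.coprime_iff_not_dvd]
      intro hd; have := Nat.le_of_dvd (by norm_num) hd; omega
    have h3 := h2.prod_one_sub_pow_eq_order
    have h4 := congrArg norm h3
    rw [norm_prod] at h4
    rw [hfull, ← two_mul]
    trans ‖(((2 * m : ℕ) : ℂ) + 1)‖
    · rw [← h4]
      refine Finset.prod_congr rfl fun k hk => ?_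
      have hk' := Finset.mem_range.1 hk
      have : ζ ^ (k+1) * (ζ ^ (k+1) - ζ ^ (p - (k+1))) = -(1 - (ζ^2)^(k+1)) := by
        rw [mul_sub, ← pow_add, ← pow_add, show k + 1 + (p - (k+1)) = p by omega, hprim.pow_eq_one]
        ring
      have h5 := congrArg norm this
      rw [norm_mul, norm_neg, norm_pow, hnorm, one_pow, one_mul] at h5
      exact h5
    · rw [hm]
      have : (((2 * m : ℕ) : ℂ) + 1) = ((2 * m + 1 : ℕ) : ℂ) := by push_cast; ring
      rw [this, Complex.norm_natCast]
  rw [hB, ← hSq, Real.sqrt_mul_self hSpos.le]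

lemma gauss_all (p : ℕ) [hp : Fact p.Prime] (hp4 : p % 4 = 3) (n : ℕ) :
    ∑ j ∈ Finset.range p, (legendreSym p j : ℂ) * (Complex.exp (2 * Real.pi * Complex.I / p)) ^ (j * n)
      = (legendreSym p n : ℂ) * (Complex.I * (Real.sqrt p : ℂ)) := by
  set ζ := Complex.exp (2 * Real.pi * Complex.I / p) with hζ
  have hprim : IsPrimitiveRoot ζ p := Complex.isPrimitiveRoot_exp p hp.out.ne_zero
  obtain ⟨m, hm⟩ : ∃ m, p = 2 * m + 1 := ⟨p / 2, by omega⟩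
  have hm0 : 0 < m := by omega
  have hp2 : p ≠ 2 := by omega
  set χ : MulChar (ZMod p) ℂ := (quadraticChar (ZMod p)).ringHomComp (Int.castRingHom ℂ) with hχ
  have hrc : ringChar (ZMod p) ≠ 2 := by rwa [ZMod.ringChar_zmod_n]
  have hχ1 : χ ≠ 1 := (MulChar.ringHomComp_ne_one_iff (RingHom.injective_int _)).mpr
    (quadraticChar_ne_one hrc)
  have hχ2 : χ.IsQuadratic := (quadraticChar_isQuadratic (ZMod p)).comp _
  have hχv : ∀ j : ℕ, χ (j : ZMod p) = (legendreSym p j : ℂ) := by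
    intro j; simp [hχ, legendreSym]
  have hψv : ∀ j : ℕ, ZMod.stdAddChar (j : ZMod p) = ζ ^ j := by
    intro j
    have := ZMod.stdAddChar_coe (N := p) (j : ℤ)
    simp only [Int.cast_natCast] at this
    rw [this, hζ, ← Complex.exp_nat_mul]; congr 1; ring
  have hg : gaussSum χ ZMod.stdAddChar = ∑ j ∈ Finset.range p, (legendreSym p j : ℂ) * ζ ^ j := by
    rw [gaussSum, sum_zmod_eq]
    exact Finset.sum_congr rfl fun j _ => by rw [hχv, hψv]
  have hsq := gaussSum_sq hχ1 hχ2 (ZMod.isPrimitive_stdAddChar p)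
  have hm1 : χ (-1) = -1 := by
    have : χ (-1) = (legendreSym p (-1) : ℂ) := by simp [hχ, legendreSym]
    rw [this, legendreSym.at_neg_one hp2, ZMod.χ₄_nat_three_mod_four hp4]; simp
  rw [hm1, ZMod.card] at hsq
  set B := ∏ k ∈ Finset.range m, (ζ ^ (k + 1) - ζ ^ (p - (k + 1))) with hB
  have hBv : B = Complex.I ^ m * (Real.sqrt p : ℂ) := zeta_prod p m hm hm0
  have hsqrt : (Real.sqrt p : ℂ) ^ 2 = p := by
    rw [← Complex.ofReal_pow, Real.sq_sqrt (by positivity)]; simp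
  have hB2 : B ^ 2 = -1 * p := by
    rw [hBv, mul_pow, hsqrt, ← pow_mul, mul_comm m 2, pow_mul, Complex.I_sq, Odd.neg_one_pow]
    rw [Nat.odd_iff]; omega
  have hmain : gaussSum χ ZMod.stdAddChar = Complex.I * (Real.sqrt p : ℂ) := by
    have key : ∀ ε : ℤ, ε = 1 ∨ ε = -1 → gaussSum χ ZMod.stdAddChar = ε * B → ε = legendreSym p (-2) := by
      intro ε hε h
      apply eps_eq p m hm hm0 ε hε
      rw [cyclotomic_eq_minpoly hprim hp.out.pos]
      apply minpoly.isIntegrallyClosed_dvd (hprim.isIntegral hp.out.pos)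
      rw [hg] at h
      simp [h, hB]
    have hor : ∃ ε : ℤ, (ε = 1 ∨ ε = -1) ∧ gaussSum χ ZMod.stdAddChar = ε * B := by
      rcases sq_eq_sq_iff_eq_or_eq_neg.1 (hsq.trans hB2.symm) with h | h
      · exact ⟨1, Or.inl rfl, by simp [h]⟩
      · exact ⟨-1, Or.inr rfl, by simp [h]⟩
    obtain ⟨ε, hε, h⟩ := hor
    have he := key ε hε h
    rw [h, he, legendreSym.at_neg_two hp2, ZMod.χ₈'_nat_eq_if_mod_eight, hBv]
    have h8 : p % 8 = 3 ∨ p % 8 = 7 := by omega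
    rcases h8 with h8 | h8
    · obtain ⟨q, hq⟩ : ∃ q, m = 4 * q + 1 := ⟨m / 4, by omega⟩
      rw [if_neg (by omega), if_pos (by omega), hq, pow_add, pow_mul, Complex.I_pow_four]; simp
    · obtain ⟨q, hq⟩ : ∃ q, m = 4 * q + 3 := ⟨m / 4, by omega⟩
      rw [if_neg (by omega), if_neg (by omega), hq, pow_add, pow_mul, Complex.I_pow_four, Complex.I_pow_three]; simp
  have hlhs : ∑ j ∈ Finset.range p, (legendreSym p j : ℂ) * ζ ^ (j * n) =
      gaussSum χ (ZMod.stdAddChar.mulShift (n : ZMod p)) := by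
    rw [gaussSum, sum_zmod_eq]
    refine Finset.sum_congr rfl fun j _ => ?_
    rw [AddChar.mulShift_apply, hχv, ← Nat.cast_mul, hψv, mul_comm j n]
  rw [hlhs, ← hmain, ← hχv]
  by_cases hn : (n : ZMod p) = 0
  · rw [hn, AddChar.mulShift_zero, gaussSum_one_right hχ1, χ.map_zero, zero_mul]
  · have := gaussSum_mulShift_eq χ ZMod.stdAddChar (Units.mk0 (n : ZMod p) hn)
    rw [hχ2.inv] at this
    exact this

lemma gauss_sin (p : ℕ) [hp : Fact p.Prime] (hp4 : p % 4 = 3) (n : ℕ) :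
    ∑ j ∈ Finset.range p, (legendreSym p j : ℝ) * Real.sin (2 * Real.pi * n * (j / p))
      = (legendreSym p n : ℝ) * Real.sqrt p := by
  have h := congrArg Complex.im (gauss_all p hp4 n)
  rw [Complex.im_sum] at h
  have hr : ((legendreSym p n : ℂ) * (Complex.I * (Real.sqrt p : ℂ))).im = (legendreSym p n : ℝ) * Real.sqrt p := by
    rw [show (legendreSym p n : ℂ) = ((legendreSym p n : ℝ) : ℂ) by simp, Complex.im_ofReal_mul]
    simp
  rw [hr] at h
  rw [← h]
  refine Finset.sum_congr rfl fun j _ => ?_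
  rw [show (legendreSym p j : ℂ) = ((legendreSym p j : ℝ) : ℂ) by simp, Complex.im_ofReal_mul,
    ← Complex.exp_nat_mul,
    show ((j * n : ℕ) : ℂ) * (2 * Real.pi * Complex.I / p) = ((2 * Real.pi * n * (j / p) : ℝ) : ℂ) * Complex.I by
      push_cast; ring, Complex.exp_ofReal_mul_I_im]


end Helpers

lemma leg_reflect (p : ℕ) [hp : Fact p.Prime] (hp4 : p % 4 = 3) (j : ℕ) (hj : j ≤ p) :
    legendreSym p ((p - j : ℕ) : ℤ) = - legendreSym p j := by
  have h1 : legendreSym p ((p - j : ℕ) : ℤ) = legendreSym p (-(j : ℤ)) := by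
    simp only [legendreSym]
    congr 1
    push_cast [Nat.cast_sub hj]
    simp
  rw [h1, legendreSym.at_neg (by omega), ZMod.χ₄_nat_three_mod_four hp4]
  simp

/-- For a prime `p ≡ 3 (mod 4)` and `0 < α < 1` with `αp ∉ ℤ`, the partial
sums `∑_{m=1}^{M} ((1 - cos(2πmα))/m) (m/p)` converge to `(π/√p) · L(α,p)`,
where `L(α,p) = ∑_{n=1}^{⌊αp⌋} (n/p)`. -/
theorem stmt_6 (p : ℕ) [Fact p.Prime] (hp4 : p % 4 = 3) (α : ℝ) (h0 : 0 < α)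
    (h1 : α < 1) (hint : ∀ k : ℤ, α * (p : ℝ) ≠ (k : ℝ)) :
    Tendsto (fun M : ℕ =>
        ∑ m ∈ Finset.Icc 1 M,
          (1 - Real.cos (2 * Real.pi * (m : ℝ) * α)) / (m : ℝ) *
            (legendreSym p (m : ℤ) : ℝ))
      atTop
      (nhds (Real.pi / Real.sqrt p *
        ((∑ n ∈ Finset.Icc 1 ⌊α * (p : ℝ)⌋₊, legendreSym p (n : ℤ) : ℤ) : ℝ))) := by
  have hpP : p.Prime := Fact.out
  have hp0 : (0:ℝ) < p := by exact_mod_cast hpP.pos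
  have hsp : 0 < Real.sqrt p := Real.sqrt_pos.2 hp0
  set χ : ℕ → ℝ := fun j => (legendreSym p j : ℝ) with hχ
  have hχ0 : χ 0 = 0 := by simp [hχ]
  -- termwise identity
  have hterm : ∀ m : ℕ, (1 - Real.cos (2 * Real.pi * (m : ℝ) * α)) / (m : ℝ) * χ m =
      ∑ j ∈ Finset.range p, χ j / Real.sqrt p * (Real.sin (2 * Real.pi * m * (j / p)) / m
        - 1/2 * (Real.sin (2 * Real.pi * m * (j / p + α)) / m)
        - 1/2 * (Real.sin (2 * Real.pi * m * (j / p - α)) / m)) := by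
    intro m
    have e : χ m = (∑ j ∈ Finset.range p, χ j * Real.sin (2 * Real.pi * m * (j / p))) / Real.sqrt p := by
      rw [gauss_sin p hp4 m]; field_simp; rfl
    rw [e, Finset.sum_div, Finset.mul_sum]
    refine Finset.sum_congr rfl fun j _ => ?_
    rw [mul_add (2 * Real.pi * (m:ℝ)), mul_sub (2 * Real.pi * (m:ℝ)), Real.sin_add, Real.sin_sub]
    ring
  have hsum : ∀ M : ℕ, ∑ m ∈ Finset.Icc 1 M, (1 - Real.cos (2 * Real.pi * (m : ℝ) * α)) / (m : ℝ) * χ m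
      = ∑ j ∈ Finset.range p, χ j / Real.sqrt p * (
        (∑ m ∈ Finset.range (M + 1), Real.sin (2 * Real.pi * m * (j / p)) / m)
        - 1/2 * (∑ m ∈ Finset.range (M + 1), Real.sin (2 * Real.pi * m * (j / p + α)) / m)
        - 1/2 * (∑ m ∈ Finset.range (M + 1), Real.sin (2 * Real.pi * m * (j / p - α)) / m)) := by
    intro M
    have : ∑ m ∈ Finset.Icc 1 M, (1 - Real.cos (2 * Real.pi * (m : ℝ) * α)) / (m : ℝ) * χ m =
        ∑ m ∈ Finset.range (M + 1), (1 - Real.cos (2 * Real.pi * (m : ℝ) * α)) / (m : ℝ) * χ m := by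
      apply Finset.sum_subset
      · intro x hx; simp at hx ⊢; omega
      · intro x hx hx'
        have : x = 0 := by simp at hx hx'; omega
        simp [this]
    rw [this, Finset.sum_congr rfl fun m _ => hterm m, Finset.sum_comm]
    refine Finset.sum_congr rfl fun j _ => ?_
    rw [← Finset.mul_sum, Finset.sum_sub_distrib, Finset.sum_sub_distrib, Finset.mul_sum, Finset.mul_sum]
  set c : ℕ → ℝ := fun j => Real.pi / 2 * ((if (j:ℝ) < α * p then 1 else 0)
    - (if (p:ℝ) < j + α * p then 1 else 0)) with hc
  have hlim : Tendsto (fun M : ℕ => ∑ m ∈ Finset.Icc 1 M,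
      (1 - Real.cos (2 * Real.pi * (m : ℝ) * α)) / (m : ℝ) * χ m) atTop
      (nhds (∑ j ∈ Finset.range p, χ j / Real.sqrt p * c j)) := by
    simp_rw [hsum]
    apply tendsto_finsetSum
    intro j hj
    have hjp : j < p := Finset.mem_range.1 hj
    rcases Nat.eq_zero_or_pos j with rfl | hj0
    · simp [hχ0]
    · apply Tendsto.const_mul
      have hjr : (0:ℝ) < j := by exact_mod_cast hj0
      have hjpr : (j:ℝ) < p := by exact_mod_cast hjp
      have hx0 : 0 < (j:ℝ) / p := by positivity
      have hx1 : (j:ℝ) / p < 1 := by rwa [div_lt_one hp0]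
      have hn1 : ∀ k : ℤ, (j:ℝ) / p + α ≠ k := by
        intro k hk
        apply hint (k * p - j)
        push_cast; rw [← hk]; field_simp; ring
      have hn2 : ∀ k : ℤ, (j:ℝ) / p - α ≠ k := by
        intro k hk
        apply hint (j - k * p)
        push_cast; rw [← hk]; field_simp; ring
      have t1 := (tendsto_add_atTop_iff_nat 1).2 (sin_series _ hx0 hx1)
      have t2 := (tendsto_add_atTop_iff_nat 1).2 (sin_series' _ hn1)
      have t3 := (tendsto_add_atTop_iff_nat 1).2 (sin_series' _ hn2)
      have t := (t1.sub (t2.const_mul (1/2))).sub (t3.const_mul (1/2))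
      convert! t using 2
      have f1 : Int.fract ((j:ℝ) / p + α) = (j:ℝ) / p + α - (if (p:ℝ) < j + α * p then 1 else 0) := by
        have hne : (j:ℝ) / p + α ≠ 1 := by simpa using hn1 1
        have hiff : (p:ℝ) < j + α * p ↔ 1 < (j:ℝ) / p + α := by
          rw [← mul_lt_mul_iff_left₀ hp0 (b := 1), add_mul, div_mul_cancel₀ _ hp0.ne', one_mul]
        rw [Int.fract_eq_iff]
        by_cases h : (p:ℝ) < j + α * p
        · have := hiff.1 h
          rw [if_pos h]
          exact ⟨by linarith, by linarith, 1, by push_cast; ring⟩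
        · have := lt_of_le_of_ne (not_lt.1 (mt hiff.2 h)) hne
          rw [if_neg h]
          exact ⟨by linarith, by linarith, 0, by push_cast; ring⟩
      have f2 : Int.fract ((j:ℝ) / p - α) = (j:ℝ) / p - α + (if (j:ℝ) < α * p then 1 else 0) := by
        have hiff : (j:ℝ) < α * p ↔ (j:ℝ) / p < α := by
          rw [div_lt_iff₀ hp0]
        rw [Int.fract_eq_iff]
        by_cases h : (j:ℝ) < α * p
        · have := hiff.1 h
          rw [if_pos h]
          exact ⟨by linarith, by linarith, -1, by push_cast; ring⟩
        · have := not_lt.1 (mt hiff.2 h)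
          rw [if_neg h]
          exact ⟨by linarith, by linarith, 0, by push_cast; ring⟩
      rw [f1, f2, hc]
      ring
  have hA : ∑ j ∈ Finset.range p, χ j * (if (p:ℝ) < j + α * p then 1 else 0) =
      - ∑ j ∈ Finset.range p, χ j * (if (j:ℝ) < α * p then 1 else 0) := by
    obtain ⟨q, hq⟩ : ∃ q, p = q + 1 := ⟨p - 1, by have := hpP.pos; omega⟩
    have hr : Finset.range p = Finset.range (q + 1) := by rw [← hq]
    rw [hr, Finset.sum_range_succ', Finset.sum_range_succ', hχ0, ← Finset.sum_range_reflect]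
    simp only [zero_mul, add_zero]
    rw [← Finset.sum_neg_distrib]
    refine Finset.sum_congr rfl fun k hk => ?_
    have hk' := Finset.mem_range.1 hk
    have e : q - 1 - k + 1 = p - (k + 1) := by omega
    have e2 : χ (p - (k+1)) = - χ (k+1) := by
      simp only [hχ]
      rw [leg_reflect p hp4 (k+1) (by omega)]
      push_cast; ring
    rw [e, e2, Nat.cast_sub (by omega : k + 1 ≤ p)]
    have : ((p:ℝ) < p - ((k+1 : ℕ):ℝ) + α * p) ↔ (((k+1 : ℕ):ℝ) < α * p) := by
      constructor <;> intro h <;> linarith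
    simp only [this]
    ring
  have hF : ∑ j ∈ Finset.range p, χ j * (if (j:ℝ) < α * p then 1 else 0) =
      ∑ n ∈ Finset.Icc 1 ⌊α * (p : ℝ)⌋₊, χ n := by
    have hap : 0 ≤ α * p := by positivity
    have hlt : ⌊α * (p : ℝ)⌋₊ < p := by
      rw [Nat.floor_lt hap]; nlinarith
    symm
    have : ∀ n ∈ Finset.Icc 1 ⌊α * (p : ℝ)⌋₊, χ n = χ n * (if (n:ℝ) < α * p then 1 else 0) := by
      intro n hn
      have h2 := (Nat.le_floor_iff hap).1 (Finset.mem_Icc.1 hn).2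
      have h3 : (n:ℝ) < α * p := lt_of_le_of_ne h2 fun h => hint n (by rw [← h]; simp)
      rw [if_pos h3, mul_one]
    rw [Finset.sum_congr rfl this]
    apply Finset.sum_subset
    · intro x hx; simp at hx ⊢; omega
    · intro x hx hx'
      rcases Nat.eq_zero_or_pos x with rfl | hx0
      · rw [hχ0, zero_mul]
      · have : ¬ ((x:ℝ) < α * p) := by
          intro h
          apply hx'
          exact Finset.mem_Icc.2 ⟨hx0, Nat.le_floor h.le⟩
        rw [if_neg this, mul_zero]
  have hfin : ∑ j ∈ Finset.range p, χ j / Real.sqrt p * c j = Real.pi / Real.sqrt p *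
        ((∑ n ∈ Finset.Icc 1 ⌊α * (p : ℝ)⌋₊, legendreSym p (n : ℤ) : ℤ) : ℝ) := by
    have e1 : ∑ j ∈ Finset.range p, χ j / Real.sqrt p * c j = Real.pi / (2 * Real.sqrt p) *
        (∑ j ∈ Finset.range p, χ j * (if (j:ℝ) < α * p then 1 else 0)
        - ∑ j ∈ Finset.range p, χ j * (if (p:ℝ) < j + α * p then 1 else 0)) := by
      rw [← Finset.sum_sub_distrib, Finset.mul_sum]
      refine Finset.sum_congr rfl fun j _ => ?_
      simp only [hc]
      field_simp
    rw [e1, hA, hF]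
    push_cast
    simp only [hχ]
    field_simp
    ring
  rw [← hfin]
  exact hlim
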